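/- arXiv:2410.20246 — 6 statements merged into one kernel-verified Lean document; each statement's English description precedes it below -/
import Mathlib

section
/- Let Φ be a finite reduced crystallographic root system with base Δ, and suppose Φ is simply laced and irreducible (i.e. Δ is connected with respect to adjacency). Then all simple roots lie in the same orbit of the Weyl group W: for any α, β ∈ Δ there exists w ∈ W with w(α) = β. -/
/-!
Along a path of adjacent simple roots it suffices to move one step. If `a` and `b` are adjacent
simple roots, then `⟨a, b∨⟩ = -1`, and also `⟨b, a∨⟩ = -1`, so `s_a (s_b a) = s_a (a + b) = b`.
The symmetry of adjacency follows from simple lacedness: if `⟨b, a∨⟩` were `0`, then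
`s_a (s_b a) = b - a` would be a root with `⟨b - a, b∨⟩ = 3`.
-/

/-- A finite reduced crystallographic root system together with a base (set of
simple roots) `Δ`, in a vector space `V` over a field `F` of characteristic zero.
For a root `α`, `coroot α` is the linear functional `⟨·, α∨⟩`; `reflect α` below
is the reflection `s_α`. -/
structure BasedRootSystem (F : Type*) [Field F] [CharZero F]
    (V : Type*) [AddCommGroup V] [Module F V] where
  /-- the set of roots -/
  Φ : Set V
  finite : Φ.Finite
  zero_not_mem : (0 : V) ∉ Φ
  /-- `coroot α` is the linear functional `⟨·, α∨⟩` (relevant for `α ∈ Φ`) -/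
  coroot : V → (V →ₗ[F] F)
  coroot_self : ∀ α ∈ Φ, coroot α α = 2
  reflect_mem : ∀ α ∈ Φ, ∀ β ∈ Φ, β - coroot α β • α ∈ Φ
  crystallographic : ∀ α ∈ Φ, ∀ β ∈ Φ, ∃ n : ℤ, coroot α β = (n : F)
  neg_mem : ∀ α ∈ Φ, -α ∈ Φ
  reduced : ∀ α ∈ Φ, ∀ t : F, t • α ∈ Φ → t = 1 ∨ t = -1
  /-- the base (set of simple roots) -/
  Δ : Finset V
  Δ_subset : ∀ δ ∈ Δ, δ ∈ Φ
  Δ_linearIndependent : LinearIndependent F (fun δ : {v : V // v ∈ Δ} => (δ : V))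
  /-- every root is an `ℕ`-linear combination of the simple roots, or the negative
  of such a combination -/
  decomp : ∀ α ∈ Φ, (∃ c : V → ℕ, α = ∑ δ ∈ Δ, (c δ : F) • δ) ∨
    (∃ c : V → ℕ, α = -∑ δ ∈ Δ, (c δ : F) • δ)
  /-- distinct simple roots of a base have nonpositive pairing -/
  simple_pair_nonpos : ∀ α ∈ Δ, ∀ β ∈ Δ, α ≠ β → ∃ n : ℤ, n ≤ 0 ∧ coroot β α = (n : F)

namespace BasedRootSystem

variable {F : Type*} [Field F] [CharZero F] {V : Type*} [AddCommGroup V] [Module F V]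

/-- The reflection `s_α : x ↦ x − ⟨x, α∨⟩ α`. -/
def reflect (B : BasedRootSystem F V) (α x : V) : V := x - B.coroot α x • α

/-- `Φ` is simply laced: `⟨α, β∨⟩ ∈ {−1, 0, 1}` for all roots `α ≠ ±β`. -/
def IsSimplyLaced (B : BasedRootSystem F V) : Prop :=
  ∀ α ∈ B.Φ, ∀ β ∈ B.Φ, α ≠ β → α ≠ -β →
    B.coroot β α = -1 ∨ B.coroot β α = 0 ∨ B.coroot β α = 1

/-- Distinct simple roots `α, β` are adjacent if `⟨α, β∨⟩ ≠ 0`. -/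
def Adj (B : BasedRootSystem F V) (α β : V) : Prop := α ≠ β ∧ B.coroot β α ≠ 0

/-- `a` and `b` are joined by a path within `S` consisting of consecutively
adjacent elements. -/
def JoinedIn (B : BasedRootSystem F V) (S : Set V) (a b : V) : Prop :=
  Relation.ReflTransGen (fun u w => u ∈ S ∧ w ∈ S ∧ B.Adj u w) a b

/-- A subset is connected if any two of its elements are joined by a path within it. -/
def IsConnectedSubset (B : BasedRootSystem F V) (S : Set V) : Prop :=
  ∀ a ∈ S, ∀ b ∈ S, B.JoinedIn S a b

/-- The connected component of `a` in `S`. -/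
def component (B : BasedRootSystem F V) (S : Set V) (a : V) : Set V :=
  {b ∈ S | B.JoinedIn S a b}

end BasedRootSystem

namespace BasedRootSystem

variable {F : Type*} [Field F] [CharZero F] {V : Type*} [AddCommGroup V] [Module F V]

/-- For distinct, non-opposite simple roots the pairing is `-1` or `0`: simple lacedness leaves
`-1, 0, 1`, and the pairing of distinct simple roots is nonpositive. -/
lemma IsSimplyLaced.coroot_simple {B : BasedRootSystem F V} (hsl : B.IsSimplyLaced) {a b : V}
    (ha : a ∈ B.Δ) (hb : b ∈ B.Δ) (hne : a ≠ b) (hneg : a ≠ -b) :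
    B.coroot b a = -1 ∨ B.coroot b a = 0 := by
  rcases hsl a (B.Δ_subset a ha) b (B.Δ_subset b hb) hne hneg with h | h | h
  · exact Or.inl h
  · exact Or.inr h
  · obtain ⟨n, hn, h'⟩ := B.simple_pair_nonpos a ha b hb hne
    rw [h] at h'
    have : n = 1 := by exact_mod_cast h'.symm
    omega

/-- Adjacent simple roots are conjugate under the Weyl group. -/
lemma IsSimplyLaced.exists_foldr_of_adj {B : BasedRootSystem F V} (hsl : B.IsSimplyLaced)
    {a b : V} (ha : a ∈ B.Δ) (hb : b ∈ B.Δ) (hab : B.Adj a b) :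
    ∃ l : List V, (∀ γ ∈ l, γ ∈ B.Φ) ∧ l.foldr B.reflect a = b := by
  obtain ⟨hne, h0⟩ := hab
  have haΦ := B.Δ_subset a ha
  have hbΦ := B.Δ_subset b hb
  have haa := B.coroot_self a haΦ
  have hbb := B.coroot_self b hbΦ
  by_cases hneg : a = -b
  · -- Two elements of a base are never opposite, but in this case `s_b` already maps `a` to `b`.
    refine ⟨[b], by simpa using hbΦ, ?_⟩
    simp only [List.foldr_cons, List.foldr_nil, reflect, hneg, map_neg, hbb]
    module
  have hba : B.coroot b a = -1 := (hsl.coroot_simple ha hb hne hneg).resolve_right h0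
  rcases hsl.coroot_simple hb ha hne.symm (fun h => hneg (by simp [h])) with hab | hab
  · refine ⟨[a, b], by simp [haΦ, hbΦ], ?_⟩
    simp only [List.foldr_cons, List.foldr_nil, reflect, hba, map_sub, map_smul, haa, hab,
      smul_eq_mul]
    module
  · exfalso
    have h1 := B.reflect_mem a haΦ _ (B.reflect_mem b hbΦ a haΦ)
    have h2 : a - B.coroot b a • b - B.coroot a (a - B.coroot b a • b) • a = b - a := by
      simp only [hba, map_sub, map_smul, haa, hab, smul_eq_mul]
      module
    rw [h2] at h1
    have h3 : B.coroot b (b - a) = 3 := by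
      rw [map_sub, hbb, hba]
      norm_num
    -- The pairing `3` with `b∨` also distinguishes `b - a` from `b` and `-b`, which pair to `±2`.
    rcases hsl _ h1 b hbΦ
      (fun h => by rw [h, hbb] at h3; norm_num at h3)
      (fun h => by rw [h, map_neg, hbb] at h3; norm_num at h3) with h | h | h <;>
    · rw [h3] at h
      norm_num at h

end BasedRootSystem

/-- If `Φ` is simply laced and irreducible, all simple roots lie in the same orbit
of the Weyl group (the group generated by the reflections `s_γ`, `γ ∈ Φ`): any two
simple roots are related by a composite of reflections in roots. -/
theorem statement1 {F : Type*} [Field F] [CharZero F] {V : Type*} [AddCommGroup V]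
    [Module F V] (B : BasedRootSystem F V) (hsl : B.IsSimplyLaced)
    (hirr : B.IsConnectedSubset (B.Δ : Set V))
    {α β : V} (hα : α ∈ B.Δ) (hβ : β ∈ B.Δ) :
    ∃ l : List V, (∀ γ ∈ l, γ ∈ B.Φ) ∧ l.foldr B.reflect α = β := by
  induction hirr α hα β hβ with
  | refl => exact ⟨[], by simp, rfl⟩
  | tail _ hstep ih =>
    obtain ⟨hb, hc, hadj⟩ := hstep
    obtain ⟨l, hl, hlα⟩ := ih hb
    obtain ⟨m, hm, hmb⟩ := hsl.exists_foldr_of_adj hb hc hadj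
    refine ⟨m ++ l, fun γ hγ => ?_, by rw [List.foldr_append, hlα, hmb]⟩
    exact (List.mem_append.mp hγ).elim (hm γ) (hl γ)
end

section
/- Let Φ be a finite reduced crystallographic simply laced root system with base Δ, let Ψ ⊆ Φ be a root subsystem, and let C be a connected component of Δ \ Ψ (the connected component of some element of Δ \ Ψ with respect to adjacency within Δ \ Ψ). If α ∈ Δ with α ∉ C, then C ⊆ Δ \ s_α(Ψ), i.e. no element of C belongs to s_α(Ψ). -/
/-- If `Ψ ⊆ Φ` is a root subsystem of a simply laced root system, `C` is a connected
component of `Δ \ Ψ`, and `α ∈ Δ` with `α ∉ C`, then `C ⊆ Δ \ s_α(Ψ)`. -/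
theorem statement2 {F : Type*} [Field F] [CharZero F] {V : Type*} [AddCommGroup V]
    [Module F V] (B : BasedRootSystem F V) (hsl : B.IsSimplyLaced)
    (Ψ : Set V) (hΨsub : Ψ ⊆ B.Φ)
    (hΨrefl : ∀ γ ∈ Ψ, B.reflect γ '' Ψ = Ψ)
    (a : V) (ha : a ∈ ((B.Δ : Set V) \ Ψ))
    (C : Set V) (hC : C = B.component ((B.Δ : Set V) \ Ψ) a)
    {α : V} (hα : α ∈ B.Δ) (hαC : α ∉ C) :
    ∀ b ∈ C, b ∉ B.reflect α '' Ψ := by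
  subst hC
  rintro b ⟨hbS, hjoin⟩ ⟨γ, hγ, rfl⟩
  by_cases hαΨ : α ∈ Ψ
  · -- Here `s_α(Ψ) = Ψ`, which misses the component.
    exact hbS.2 (hΨrefl α hαΨ ▸ Set.mem_image_of_mem _ hγ)
  · have hpair : B.coroot α (B.reflect α γ) = 0 := by
      -- Otherwise `α` would equal or be adjacent to an element of the component, hence lie in it.
      by_contra hne
      refine hαC ⟨⟨hα, hαΨ⟩, hjoin.tail ⟨hbS, ⟨hα, hαΨ⟩, ?_, hne⟩⟩
      intro heq
      exact hαC (heq ▸ ⟨hbS, hjoin⟩)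
    -- Since `⟨s_α γ, α∨⟩ = -⟨γ, α∨⟩`, the reflection fixes `γ`.
    have hγ0 : B.coroot α γ = 0 := by
      simp only [BasedRootSystem.reflect, map_sub, map_smul, smul_eq_mul,
        B.coroot_self α (B.Δ_subset α hα)] at hpair
      linear_combination -hpair
    apply hbS.2
    simpa [BasedRootSystem.reflect, hγ0] using hγ
end

section
/- Let Φ be a finite reduced crystallographic root system with base Δ which is simply laced and irreducible, let Ψ be a proper root subsystem of Φ (Ψ ⊆ Φ, Ψ ≠ Φ, closed under its own reflections), and fix α₁ ∈ Δ. Then there exists an element w of the Weyl group W such that Δ \ w(Ψ) is a connected subset of Δ containing α₁. -/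
namespace BasedRootSystem

variable {F : Type*} [Field F] [CharZero F] {V : Type*} [AddCommGroup V] [Module F V]

/-! ### Reflections and pairings -/

lemma reflect_add (B : BasedRootSystem F V) (d x y : V) :
    B.reflect d (x + y) = B.reflect d x + B.reflect d y := by
  simp only [reflect, map_add, add_smul]; abel

lemma reflect_reflect (B : BasedRootSystem F V) {d : V} (hd : d ∈ B.Φ) (x : V) :
    B.reflect d (B.reflect d x) = x := by
  simp only [reflect, map_sub, map_smul, B.coroot_self d hd, smul_eq_mul, sub_smul, mul_smul]
  module

lemma mem_reflect_image (B : BasedRootSystem F V) {d : V} (hd : d ∈ B.Φ) (S : Set V) (x : V) :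
    x ∈ B.reflect d '' S ↔ B.reflect d x ∈ S := by
  constructor
  · rintro ⟨y, hy, rfl⟩
    rwa [B.reflect_reflect hd]
  · intro h
    exact ⟨_, h, B.reflect_reflect hd x⟩

/-- In a simply laced system, the coroot of `β` never pairs to `3` with a root. -/
lemma coroot_ne_three (B : BasedRootSystem F V) (hsl : B.IsSimplyLaced) {x β : V}
    (hx : x ∈ B.Φ) (hβ : β ∈ B.Φ) : B.coroot β x ≠ 3 := by
  intro h
  have h2 := B.coroot_self β hβ
  by_cases h1 : x = β
  · rw [h1, h2] at h; norm_num at h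
  by_cases h3 : x = -β
  · rw [h3, map_neg, h2] at h; norm_num at h
  rcases hsl x hx β hβ h1 h3 with h4 | h4 | h4 <;> rw [h4] at h <;> norm_num at h

/-- The pairing is symmetric on the value `1`: otherwise `α + β` would be a root pairing to `3`
with `β∨`. -/
lemma coroot_symm_one (B : BasedRootSystem F V) (hsl : B.IsSimplyLaced) {α β : V}
    (hα : α ∈ B.Φ) (hβ : β ∈ B.Φ) (h : B.coroot β α = 1) : B.coroot α β = 1 := by
  have h2 := B.coroot_self β hβ
  have hα2 := B.coroot_self α hα
  have h1 : β ≠ α := by rintro rfl; rw [h2] at h; norm_num at h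
  have h3 : β ≠ -α := by
    intro h3
    have h5 : α = -β := by rw [h3, neg_neg]
    rw [h5, map_neg, h2] at h
    norm_num at h
  have key : α + β ∉ B.Φ := fun hm => B.coroot_ne_three hsl hm hβ (by
    rw [map_add, h, h2]; norm_num)
  rcases hsl β hβ α hα h1 h3 with h4 | h4 | h4
  · have := B.reflect_mem α hα β hβ
    rw [h4] at this
    exact absurd (by convert this using 1; module) key
  · have h5 := B.reflect_mem β hβ α hα
    have h6 := B.neg_mem _ (B.reflect_mem α hα _ h5)
    rw [h, map_sub, map_smul, h4, hα2] at h6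
    exact absurd (by convert h6 using 1; simp; module) key
  · exact h4

/-- The pairing is symmetric on the value `-1`: otherwise `β - α` would be a root pairing to `3`
with `β∨`. -/
lemma coroot_symm_neg_one (B : BasedRootSystem F V) (hsl : B.IsSimplyLaced) {α β : V}
    (hα : α ∈ B.Φ) (hβ : β ∈ B.Φ) (h1 : β ≠ α) (h3 : β ≠ -α) (h : B.coroot β α = -1) :
    B.coroot α β = -1 := by
  have h2 := B.coroot_self β hβ
  have hα2 := B.coroot_self α hα
  have key : β - α ∉ B.Φ := fun hm => B.coroot_ne_three hsl hm hβ (by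
    rw [map_sub, h, h2]; norm_num)
  rcases hsl β hβ α hα h1 h3 with h4 | h4 | h4
  · exact h4
  · have h5 := B.reflect_mem β hβ α hα
    have h6 := B.reflect_mem α hα _ h5
    rw [h, map_sub, map_smul, h4, hα2] at h6
    exact absurd (by convert h6 using 1; simp; module) key
  · have := B.reflect_mem α hα β hβ
    rw [h4] at this
    exact absurd (by convert this using 1; module) key

/-! ### Simple roots -/

/-- The negative of a simple root is not a nonnegative combination of simple roots. -/
lemma simple_ne_neg_sum (B : BasedRootSystem F V) {d : V} (hd : d ∈ B.Δ) (c : V → ℕ) :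
    d ≠ -∑ δ ∈ B.Δ, (c δ : F) • δ := by
  classical
  intro h
  have hli := B.Δ_linearIndependent
  rw [Fintype.linearIndependent_iff] at hli
  have h0 := hli (fun δ => (c δ : F) + if (δ : V) = d then 1 else 0) (by
    simp only [add_smul, Finset.sum_add_distrib, ite_smul, one_smul, zero_smul]
    rw [Finset.sum_coe_sort B.Δ (fun δ => (c δ : F) • δ),
      Finset.sum_coe_sort B.Δ (fun δ => if δ = d then δ else 0), Finset.sum_ite_eq' B.Δ d,
      if_pos hd]
    rw [add_comm]
    exact eq_neg_iff_add_eq_zero.mp h) ⟨d, hd⟩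
  simp only [if_true] at h0
  exact Nat.cast_add_one_ne_zero (c d) h0

lemma simple_ne_neg (B : BasedRootSystem F V) {d e : V} (hd : d ∈ B.Δ) (he : e ∈ B.Δ) :
    d ≠ -e := by
  classical
  have := B.simple_ne_neg_sum hd (fun δ => if δ = e then 1 else 0)
  simpa [he] using this

lemma simple_pair (B : BasedRootSystem F V) (hsl : B.IsSimplyLaced) {d e : V} (hd : d ∈ B.Δ)
    (he : e ∈ B.Δ) (h : d ≠ e) : B.coroot e d = -1 ∨ B.coroot e d = 0 := by
  rcases hsl d (B.Δ_subset d hd) e (B.Δ_subset e he) h (B.simple_ne_neg hd he) with h1 | h1 | h1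
  · exact Or.inl h1
  · exact Or.inr h1
  · obtain ⟨n, hn, hn'⟩ := B.simple_pair_nonpos d hd e he h
    rw [h1] at hn'
    have : (1 : ℤ) = n := by exact_mod_cast hn'
    omega

lemma adj_pair (B : BasedRootSystem F V) (hsl : B.IsSimplyLaced) {d e : V} (hd : d ∈ B.Δ)
    (he : e ∈ B.Δ) (h : B.Adj d e) : B.coroot e d = -1 ∧ B.coroot d e = -1 := by
  have h1 := (B.simple_pair hsl hd he h.1).resolve_right h.2
  exact ⟨h1, B.coroot_symm_neg_one hsl (B.Δ_subset d hd) (B.Δ_subset e he) h.1.symm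
    (B.simple_ne_neg he hd) h1⟩

lemma adj_symm (B : BasedRootSystem F V) (hsl : B.IsSimplyLaced) {d e : V} (hd : d ∈ B.Δ)
    (he : e ∈ B.Δ) (h : B.Adj d e) : B.Adj e d :=
  ⟨h.1.symm, by rw [(B.adj_pair hsl hd he h).2]; norm_num⟩

lemma reflect_eq_self_of_not_adj (B : BasedRootSystem F V) {d c : V} (hne : c ≠ d)
    (h : ¬ B.Adj c d) : B.reflect d c = c := by
  have : B.coroot d c = 0 := by
    by_contra h0
    exact h ⟨hne, h0⟩
  simp [reflect, this]

/-- A set of roots stable under its own reflections and containing all simple roots contains all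
positive roots. By induction on the height: some simple `δ` in the support of `β` pairs to `1`
with `β`, and then `β = s_δ (β - δ)`. -/
lemma pos_mem_of_simple_subset (B : BasedRootSystem F V) (hsl : B.IsSimplyLaced) {Ψ : Set V}
    (hrefl : ∀ γ ∈ Ψ, ∀ x ∈ Ψ, B.reflect γ x ∈ Ψ) (hΔ : ∀ δ ∈ B.Δ, δ ∈ Ψ) (n : ℕ) :
    ∀ c : V → ℕ, ∑ δ ∈ B.Δ, c δ = n → ∀ β ∈ B.Φ, β = ∑ δ ∈ B.Δ, (c δ : F) • δ → β ∈ Ψ := by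
  classical
  induction n with
  | zero =>
    intro c hc β hβ h
    rw [Finset.sum_eq_zero_iff] at hc
    rw [Finset.sum_eq_zero (fun δ hδ => by rw [hc δ hδ]; simp)] at h
    exact absurd (h ▸ hβ) B.zero_not_mem
  | succ n ih =>
    intro c hc β hβ h
    by_cases hβΔ : β ∈ B.Δ
    · exact hΔ β hβΔ
    have hval : ∀ δ ∈ B.Δ, B.coroot β δ = -1 ∨ B.coroot β δ = 0 ∨ B.coroot β δ = 1 := by
      intro δ hδ
      refine hsl δ (B.Δ_subset δ hδ) β hβ ?_ ?_
      · rintro rfl; exact hβΔ hδ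
      · intro hneg
        exact B.simple_ne_neg_sum hδ c (by rw [← h]; exact hneg)
    obtain ⟨δ, hδ, hcδ, hp⟩ : ∃ δ ∈ B.Δ, c δ ≠ 0 ∧ B.coroot β δ = 1 := by
      by_contra! hno
      -- Otherwise `2 = ⟨β, β∨⟩` would be the negative of a natural number.
      have h2 : B.coroot β β = 2 := B.coroot_self β hβ
      nth_rewrite 2 [h] at h2
      rw [map_sum] at h2
      have h3 : ∀ δ ∈ B.Δ, B.coroot β ((c δ : F) • δ) =
          -(((if B.coroot β δ = -1 then c δ else 0 : ℕ)) : F) := by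
        intro δ hδ
        rw [map_smul, smul_eq_mul]
        rcases hval δ hδ with h4 | h4 | h4
        · simp [h4]
        · simp [h4]
        · have : c δ = 0 := by
            by_contra h5
            exact hno δ hδ h5 h4
          simp [this]
      rw [Finset.sum_congr rfl h3, Finset.sum_neg_distrib, ← Nat.cast_sum, neg_eq_iff_add_eq_zero]
        at h2
      exact absurd (by exact_mod_cast h2) (Nat.succ_ne_zero
        (∑ δ ∈ B.Δ, (if B.coroot β δ = -1 then c δ else 0) + 1))
    have hδΦ := B.Δ_subset δ hδ
    have hp' := B.coroot_symm_one hsl hδΦ hβ hp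
    have hsub : β - δ ∈ B.Φ := by
      have := B.reflect_mem δ hδΦ β hβ
      rwa [hp', one_smul] at this
    have hcsum : ∀ x, c x = (if x = δ then c x - 1 else c x) + if x = δ then 1 else 0 := by
      intro x
      split_ifs with hx
      · subst hx; omega
      · rfl
    have hmem : β - δ ∈ Ψ := by
      refine ih (fun x => if x = δ then c x - 1 else c x) ?_ _ hsub ?_
      · rw [Finset.sum_congr rfl (fun x _ => hcsum x), Finset.sum_add_distrib,
          Finset.sum_ite_eq' B.Δ δ, if_pos hδ] at hc
        omega
      · rw [sub_eq_iff_eq_add]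
        conv_lhs => rw [h]
        rw [Finset.sum_congr rfl (fun x _ => by
          rw [show (c x : F) • x = (((if x = δ then c x - 1 else c x : ℕ)) : F) • x
            + if x = δ then x else 0 by
              conv_lhs => rw [hcsum x]
              push_cast
              rw [add_smul]
              congr 1
              split_ifs <;> simp])]
        rw [Finset.sum_add_distrib, Finset.sum_ite_eq' B.Δ δ, if_pos hδ]
    have := hrefl δ (hΔ δ hδ) _ hmem
    rw [reflect, map_sub, hp', B.coroot_self δ hδΦ] at this
    convert this using 1
    module

lemma subset_of_simple_subset (B : BasedRootSystem F V) (hsl : B.IsSimplyLaced) {Ψ : Set V}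
    (hsub : Ψ ⊆ B.Φ)
    (hrefl : ∀ γ ∈ Ψ, ∀ x ∈ Ψ, B.reflect γ x ∈ Ψ) (hΔ : ∀ δ ∈ B.Δ, δ ∈ Ψ) : B.Φ ⊆ Ψ := by
  intro β hβ
  rcases B.decomp β hβ with ⟨c, hc⟩ | ⟨c, hc⟩
  · exact B.pos_mem_of_simple_subset hsl hrefl hΔ _ c rfl β hβ hc
  · have h := B.pos_mem_of_simple_subset hsl hrefl hΔ _ c rfl (-β) (B.neg_mem β hβ)
      (by rw [hc, neg_neg])
    have h1 := hrefl _ h _ h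
    rw [reflect, B.coroot_self _ (hsub h)] at h1
    convert h1 using 1
    module

/-! ### Conjugates of the subsystem -/

/-- The cancellation property: if `y` is a root and `x`, `x + y` lie in `Ψ`, then so does `y`. -/
def Cancels (B : BasedRootSystem F V) (Ψ : Set V) : Prop :=
  ∀ x ∈ Ψ, ∀ y ∈ B.Φ, x + y ∈ Ψ → y ∈ Ψ

/-- `Ψ'` is the image of `Ψ` under an element of the Weyl group, and has the cancellation
property. -/
def IsConj (B : BasedRootSystem F V) (Ψ Ψ' : Set V) : Prop :=
  B.Cancels Ψ' ∧ ∃ l : List V, (∀ γ ∈ l, γ ∈ B.Φ) ∧ (fun v => l.foldr B.reflect v) '' Ψ = Ψ'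

lemma cancels_of_reflect (B : BasedRootSystem F V) (hsl : B.IsSimplyLaced) {Ψ : Set V}
    (hsub : Ψ ⊆ B.Φ) (hrefl : ∀ γ ∈ Ψ, ∀ x ∈ Ψ, B.reflect γ x ∈ Ψ) : B.Cancels Ψ := by
  intro x hx y hy hxy
  have hx2 := B.coroot_self x (hsub hx)
  have hxy' := hsub hxy
  have hy0 : y ≠ 0 := fun h => B.zero_not_mem (h ▸ hy)
  -- `y` is not a multiple of `x`, for then `x + y` would be `0` or `2 x`.
  have hyx : y ≠ x := by
    rintro rfl
    have := B.reduced y hy 2 (by rwa [two_smul])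
    norm_num at this
  have hyx' : y ≠ -x := by
    rintro rfl
    rw [add_neg_cancel] at hxy'
    exact B.zero_not_mem hxy'
  have hpair : B.coroot x y = -1 := by
    have h1 := hsl y hy x (hsub hx) hyx hyx'
    have h2 := hsl (x + y) hxy' x (hsub hx) (by simpa using hy0) (by
      intro h
      have h3 : y = (-2 : F) • x := by
        rw [← sub_eq_iff_eq_add'.mpr h.symm]; module
      have := B.reduced x (hsub hx) (-2) (h3 ▸ hy)
      norm_num at this)
    rw [map_add, hx2] at h2
    rcases h1 with h1 | h1 | h1
    · exact h1
    · rw [h1] at h2; norm_num at h2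
    · rw [h1] at h2; norm_num at h2
  have := hrefl x hx _ hxy
  rw [reflect, map_add, hx2, hpair] at this
  convert this using 1
  module

lemma IsConj.reflect {B : BasedRootSystem F V} {Ψ Ψ' : Set V} (h : B.IsConj Ψ Ψ') {d : V}
    (hd : d ∈ B.Φ) : B.IsConj Ψ (B.reflect d '' Ψ') := by
  obtain ⟨hc, l, hl, hl'⟩ := h
  refine ⟨?_, d :: l, ?_, ?_⟩
  · intro x hx y hy hxy
    rw [B.mem_reflect_image hd] at *
    rw [B.reflect_add] at hxy
    exact hc _ hx _ (B.reflect_mem d hd y hy) hxy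
  · simpa [hd] using hl
  · rw [← hl', Set.image_image]
    rfl

/-- Reflecting in a simple root `d` missing from `Ψ'` moves the hole to an adjacent `e ∈ Ψ'`. -/
lemma not_mem_reflect_of_adj (B : BasedRootSystem F V) (hsl : B.IsSimplyLaced) {Ψ' : Set V}
    (hc : B.Cancels Ψ') {d e : V} (hd : d ∈ B.Δ) (he : e ∈ B.Δ) (hadj : B.Adj d e)
    (hdΨ : d ∉ Ψ') (heΨ : e ∈ Ψ') : e ∉ B.reflect d '' Ψ' := by
  rw [B.mem_reflect_image (B.Δ_subset d hd), reflect, (B.adj_pair hsl hd he hadj).2]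
  intro h
  refine hdΨ (hc e heΨ d (B.Δ_subset d hd) ?_)
  convert h using 1
  module

/-- A hole at `d` can be moved along a path to `a`. -/
lemma exists_conj_not_mem (B : BasedRootSystem F V) (hsl : B.IsSimplyLaced) {Ψ : Set V} {d a : V}
    (hpath : B.JoinedIn (B.Δ : Set V) d a) :
    ∀ Ψ', B.IsConj Ψ Ψ' → d ∉ Ψ' → ∃ Ψ'', B.IsConj Ψ Ψ'' ∧ a ∉ Ψ'' := by
  induction hpath using Relation.ReflTransGen.head_induction_on with
  | refl => exact fun Ψ' h1 h2 => ⟨Ψ', h1, h2⟩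
  | @head d e hde _ ih =>
    intro Ψ' h1 h2
    obtain ⟨hd, he, hadj⟩ := hde
    by_cases heΨ : e ∈ Ψ'
    · exact ih _ (h1.reflect (B.Δ_subset _ hd))
        (B.not_mem_reflect_of_adj hsl h1.1 hd he hadj h2 heΨ)
    · exact ih Ψ' h1 heΨ

lemma isConnectedSubset_insert (B : BasedRootSystem F V) {C : Set V}
    (hC : B.IsConnectedSubset C) {c d : V} (hc : c ∈ C) (hdc : B.Adj d c) (hcd : B.Adj c d) :
    B.IsConnectedSubset (insert d C) := by
  have hmono : ∀ a b, B.JoinedIn C a b → B.JoinedIn (insert d C) a b := fun a b h =>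
    Relation.ReflTransGen.mono (fun _ _ h => ⟨Or.inr h.1, Or.inr h.2.1, h.2.2⟩) _ _ h
  have h1 : B.JoinedIn (insert d C) d c := .single ⟨Or.inl rfl, Or.inr hc, hdc⟩
  have h2 : B.JoinedIn (insert d C) c d := .single ⟨Or.inr hc, Or.inl rfl, hcd⟩
  rintro a (rfl | ha) b (rfl | hb)
  · exact .refl
  · exact h1.trans (hmono _ _ (hC c hc b hb))
  · exact (hmono _ _ (hC a ha c hc)).trans h2
  · exact hmono _ _ (hC a ha b hb)

/-- A hole at `d ∉ C` can be moved along a path towards `C`, without disturbing the holes in `C`,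
until it is adjacent to `C`. -/
lemma exists_conj_larger (B : BasedRootSystem F V) (hsl : B.IsSimplyLaced) {Ψ : Set V}
    {C : Set V} (hCΔ : C ⊆ B.Δ) (hC : B.IsConnectedSubset C) {d a : V} (ha : a ∈ C)
    (hpath : B.JoinedIn (B.Δ : Set V) d a) :
    ∀ Ψ', B.IsConj Ψ Ψ' → (∀ c ∈ C, c ∉ Ψ') → d ∉ C → d ∉ Ψ' →
      ∃ Ψ'', B.IsConj Ψ Ψ'' ∧ ∃ e ∈ B.Δ, e ∉ C ∧ B.IsConnectedSubset (insert e C) ∧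
        ∀ c ∈ insert e C, c ∉ Ψ'' := by
  induction hpath using Relation.ReflTransGen.head_induction_on with
  | refl => exact fun _ _ _ h => absurd ha h
  | @head d e hde _ ih =>
    intro Ψ' h1 hCΨ hdC hdΨ
    obtain ⟨hd, he, hadj⟩ := hde
    by_cases hex : ∃ c ∈ C, B.Adj c d
    · obtain ⟨c, hc, hcd⟩ := hex
      refine ⟨Ψ', h1, d, hd, hdC,
        B.isConnectedSubset_insert hC hc (B.adj_symm hsl (hCΔ hc) hd hcd) hcd, ?_⟩
      rintro x (rfl | hx)
      · exact hdΨ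
      · exact hCΨ x hx
    · push Not at hex
      have heC : e ∉ C := fun h => hex e h (B.adj_symm hsl hd he hadj)
      by_cases heΨ : e ∈ Ψ'
      · refine ih _ (h1.reflect (B.Δ_subset _ hd)) ?_ heC
          (B.not_mem_reflect_of_adj hsl h1.1 hd he hadj hdΨ heΨ)
        intro c hc
        have hcd : c ≠ d := fun h => hdC (h ▸ hc)
        rw [B.mem_reflect_image (B.Δ_subset d hd), B.reflect_eq_self_of_not_adj hcd (hex c hc)]
        exact hCΨ c hc
      · exact ih Ψ' h1 hCΨ heC heΨ

/-- From a conjugate whose holes include a connected set `C` containing `a`, one reaches a conjugate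
whose simple holes form a connected set containing `a`; the induction is on the number `n` of simple
roots outside `C`. -/
lemma exists_conj_connected (B : BasedRootSystem F V) (hsl : B.IsSimplyLaced)
    (hirr : B.IsConnectedSubset (B.Δ : Set V)) {Ψ : Set V} {a : V} (n : ℕ) :
    ∀ C : Set V, ((B.Δ : Set V) \ C).ncard = n → C ⊆ B.Δ → B.IsConnectedSubset C → a ∈ C →
      ∀ Ψ', B.IsConj Ψ Ψ' → (∀ c ∈ C, c ∉ Ψ') →
        ∃ Ψ'', B.IsConj Ψ Ψ'' ∧ a ∈ (B.Δ : Set V) \ Ψ'' ∧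
          B.IsConnectedSubset ((B.Δ : Set V) \ Ψ'') := by
  induction n using Nat.strong_induction_on with
  | _ n ih =>
    intro C hn hCΔ hC ha Ψ' h1 hCΨ
    by_cases hall : ∀ d ∈ (B.Δ : Set V) \ Ψ', d ∈ C
    · have : (B.Δ : Set V) \ Ψ' = C :=
        Set.Subset.antisymm hall (fun c hc => ⟨hCΔ hc, hCΨ c hc⟩)
      exact ⟨Ψ', h1, this ▸ ha, this ▸ hC⟩
    · push Not at hall
      obtain ⟨d, ⟨hd, hdΨ⟩, hdC⟩ := hall
      obtain ⟨Ψ'', h2, e, he, heC, hconn, hmiss⟩ := B.exists_conj_larger hsl hCΔ hC ha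
        (hirr d hd a (hCΔ ha)) Ψ' h1 hCΨ hdC hdΨ
      refine ih _ ?_ (insert e C) rfl (Set.insert_subset he hCΔ) hconn (Or.inr ha) Ψ'' h2 hmiss
      rw [← hn]
      refine Set.ncard_lt_ncard ?_ (B.Δ.finite_toSet.subset Set.sdiff_subset)
      rw [Set.ssubset_iff_of_subset (Set.sdiff_subset_sdiff_right (Set.subset_insert e C))]
      exact ⟨e, ⟨he, heC⟩, fun h => h.2 (Or.inl rfl)⟩

end BasedRootSystem

/-- If `Φ` is simply laced and irreducible, `Ψ` is a proper root subsystem of `Φ`, and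
`α₁ ∈ Δ`, then there is an element `w` of the Weyl group (a composite of reflections
in roots) such that `Δ \ w(Ψ)` is a connected subset of `Δ` containing `α₁`. -/
theorem statement3 {F : Type*} [Field F] [CharZero F] {V : Type*} [AddCommGroup V]
    [Module F V] (B : BasedRootSystem F V) (hsl : B.IsSimplyLaced)
    (hirr : B.IsConnectedSubset (B.Δ : Set V))
    (Ψ : Set V) (hΨsub : Ψ ⊆ B.Φ) (hΨproper : Ψ ≠ B.Φ)
    (hΨrefl : ∀ γ ∈ Ψ, B.reflect γ '' Ψ = Ψ)
    {α₁ : V} (hα₁ : α₁ ∈ B.Δ) :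
    ∃ l : List V, (∀ γ ∈ l, γ ∈ B.Φ) ∧
      α₁ ∈ (B.Δ : Set V) \ ((fun v => l.foldr B.reflect v) '' Ψ) ∧
      B.IsConnectedSubset ((B.Δ : Set V) \ ((fun v => l.foldr B.reflect v) '' Ψ)) := by
  classical
  have hrefl : ∀ γ ∈ Ψ, ∀ x ∈ Ψ, B.reflect γ x ∈ Ψ := fun γ hγ x hx => by
    have := Set.mem_image_of_mem (B.reflect γ) hx
    rwa [hΨrefl γ hγ] at this
  obtain ⟨d, hd, hdΨ⟩ : ∃ d ∈ B.Δ, d ∉ Ψ := by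
    by_contra! h
    exact hΨproper (hΨsub.antisymm (B.subset_of_simple_subset hsl hΨsub hrefl h))
  have h0 : B.IsConj Ψ Ψ := ⟨B.cancels_of_reflect hsl hΨsub hrefl, [], by simp, by simp⟩
  obtain ⟨Ψ', h1, h1'⟩ := B.exists_conj_not_mem hsl (hirr d hd α₁ hα₁) Ψ h0 hdΨ
  obtain ⟨Ψ'', ⟨_, l, hl, hl'⟩, h2⟩ := B.exists_conj_connected hsl hirr _ {α₁} rfl
    (by simpa using hα₁) (by rintro a rfl b rfl; exact .refl) rfl Ψ' h1
    (by rintro c rfl; exact h1')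
  exact ⟨l, hl, by rw [hl']; exact h2⟩
end

section
/- With the Chevalley data below over a commutative ring R, set 𝔫 = span_R{x_{−β} : β ∈ Φ⁺ with c_{α₁}(β) = 1} and 𝔭⁻ = span_R({x_{−β} : β ∈ Φ⁺} ∪ {h_δ : δ ∈ Δ} ∪ {x_β : β ∈ Φ⁺ with c_{α₁}(β) = 0}). Then 𝔫 is an ideal in 𝔭⁻: for every y ∈ 𝔭⁻ and z ∈ 𝔫 one has ⁅y, z⁆ ∈ 𝔫. -/
namespace BasedRootSystem

variable {F : Type*} [Field F] [CharZero F] {V : Type*} [AddCommGroup V] [Module F V]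

/-- The positive system `Φ⁺` determined by the base: the roots which are
`ℕ`-linear combinations of the simple roots. -/
def Pos (B : BasedRootSystem F V) : Set V :=
  {α | α ∈ B.Φ ∧ ∃ c : V → ℕ, α = ∑ δ ∈ B.Δ, (c δ : F) • δ}

end BasedRootSystem

namespace BasedRootSystem

variable {F : Type*} [Field F] [CharZero F] {V : Type*} [AddCommGroup V] [Module F V]

/-- The `α₁`-coordinate with respect to the base extends to a linear functional on all of `V`
(the base need not span `V`). -/
lemma exists_coeff_functional (B : BasedRootSystem F V) {α₁ : V} (hα₁ : α₁ ∈ B.Δ) :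
    ∃ φ : V →ₗ[F] F, ∀ c : V → ℕ, φ (∑ δ ∈ B.Δ, (c δ : F) • δ) = c α₁ := by
  classical
  obtain ⟨g, hg⟩ := LinearMap.exists_leftInverse_of_injective
    (Finsupp.linearCombination F (fun δ : {v : V // v ∈ B.Δ} => (δ : V)))
    (LinearMap.ker_eq_bot.mpr B.Δ_linearIndependent)
  refine ⟨Finsupp.lapply ⟨α₁, hα₁⟩ ∘ₗ g, fun c => ?_⟩
  have key : ∀ δ (hδ : δ ∈ B.Δ), g δ = Finsupp.single ⟨δ, hδ⟩ 1 := fun δ hδ => by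
    simpa using LinearMap.congr_fun hg (Finsupp.single ⟨δ, hδ⟩ 1)
  rw [map_sum, Finset.sum_eq_single_of_mem α₁ hα₁]
  · simp [key α₁ hα₁]
  · intro δ hδ hne
    simp [key δ hδ, hne]

lemma pos_or_neg_pos (B : BasedRootSystem F V) {γ : V} (hγ : γ ∈ B.Φ) :
    γ ∈ B.Pos ∨ -γ ∈ B.Pos := by
  rcases B.decomp γ hγ with h | ⟨c, hc⟩
  · exact Or.inl ⟨hγ, h⟩
  · exact Or.inr ⟨B.neg_mem γ hγ, c, by rw [hc, neg_neg]⟩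

end BasedRootSystem

/-- For a Chevalley system `x_α (α ∈ Φ), h_δ (δ ∈ Δ)` in a Lie algebra `L` over a
commutative ring `R`, if every positive root has `α₁`-coefficient `0` or `1`, then
`𝔫 = span{x_{−β} : β ∈ Φ⁺, c_{α₁}(β) = 1}` is an ideal in
`𝔭⁻ = span({x_{−β} : β ∈ Φ⁺} ∪ {h_δ : δ ∈ Δ} ∪ {x_β : β ∈ Φ⁺, c_{α₁}(β) = 0})`. -/
theorem statement11 {F : Type*} [Field F] [CharZero F] {V : Type*} [AddCommGroup V]
    [Module F V] (B : BasedRootSystem F V)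
    (c : V → V → ℕ)
    (hc : ∀ β ∈ B.Pos, β = ∑ δ ∈ B.Δ, (c δ β : F) • δ)
    {R : Type*} [CommRing R] {L : Type*} [LieRing L] [LieAlgebra R L]
    (x : V → L) (h : V → L) (C : V → V → ℤ)
    (hhh : ∀ δ ∈ B.Δ, ∀ δ' ∈ B.Δ, ⁅h δ, h δ'⁆ = 0)
    (hhx : ∀ δ ∈ B.Δ, ∀ α ∈ B.Φ, ∀ n : ℤ, B.coroot δ α = (n : F) → ⁅h δ, x α⁆ = n • x α)
    (hxx_mem : ∀ α ∈ B.Φ, ∀ β ∈ B.Φ, α + β ≠ 0 → α + β ∈ B.Φ →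
      ⁅x α, x β⁆ = C α β • x (α + β))
    (hxx_nmem : ∀ α ∈ B.Φ, ∀ β ∈ B.Φ, α + β ≠ 0 → α + β ∉ B.Φ → ⁅x α, x β⁆ = 0)
    (hxnx : ∀ α ∈ B.Φ, ⁅x α, x (-α)⁆ ∈ Submodule.span R (h '' (B.Δ : Set V)))
    (α₁ : V) (hα₁ : α₁ ∈ B.Δ)
    (hcoeff : ∀ β ∈ B.Pos, c α₁ β = 0 ∨ c α₁ β = 1) :
    ∀ y ∈ Submodule.span R
        (((fun β => x (-β)) '' B.Pos) ∪ (h '' (B.Δ : Set V)) ∪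
          (x '' {β | β ∈ B.Pos ∧ c α₁ β = 0})),
      ∀ z ∈ Submodule.span R ((fun β => x (-β)) '' {β | β ∈ B.Pos ∧ c α₁ β = 1}),
        ⁅y, z⁆ ∈ Submodule.span R ((fun β => x (-β)) '' {β | β ∈ B.Pos ∧ c α₁ β = 1}) := by
  obtain ⟨φ, hφ⟩ := B.exists_coeff_functional hα₁
  have hφc : ∀ β ∈ B.Pos, φ β = c α₁ β := fun β hβ => by
    conv_lhs => rw [hc β hβ]
    exact hφ fun δ => c δ β
  have hφ01 : ∀ β ∈ B.Pos, φ β = 0 ∨ φ β = 1 := fun β hβ => by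
    rw [hφc β hβ]
    rcases hcoeff β hβ with h | h <;> simp [h]
  -- The bracket of a root vector of degree `0` or `-1` with one of degree `-1`.
  have key : ∀ γ ∈ B.Φ, (φ γ = 0 ∨ φ γ = -1) → ∀ β ∈ B.Pos, c α₁ β = 1 →
      ⁅x γ, x (-β)⁆ ∈
        Submodule.span R ((fun β => x (-β)) '' {β | β ∈ B.Pos ∧ c α₁ β = 1}) := by
    intro γ hγ hγφ β hβ hβ1
    have hβφ : φ β = 1 := by simp [hφc β hβ, hβ1]
    have hsum : φ (γ + -β) = φ γ - 1 := by rw [map_add, map_neg, hβφ, sub_eq_add_neg]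
    have hne : γ + -β ≠ 0 := by
      intro h0
      rw [h0, map_zero] at hsum
      rcases hγφ with h | h <;> rw [h] at hsum <;> norm_num at hsum
    by_cases hmem : γ + -β ∈ B.Φ
    · rw [hxx_mem γ hγ (-β) (B.neg_mem β hβ.1) hne hmem]
      refine zsmul_mem (Submodule.subset_span ?_) _
      rcases B.pos_or_neg_pos hmem with hp | hp
      · exfalso
        have := hφ01 _ hp
        rw [hsum] at this
        rcases hγφ with h | h <;> rw [h] at this <;> norm_num at this
      · refine ⟨-(γ + -β), ⟨hp, (hcoeff _ hp).resolve_left fun h0 => ?_⟩, by simp⟩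
        have := hφc _ hp
        rw [map_neg, hsum, h0] at this
        rcases hγφ with h | h <;> rw [h] at this <;> norm_num at this
    · rw [hxx_nmem γ hγ (-β) (B.neg_mem β hβ.1) hne hmem]
      exact zero_mem _
  intro y hy z hz
  induction hy, hz using Submodule.span_induction₂ with
  | mem_mem y z hy hz =>
    obtain ⟨β, ⟨hβ, hβ1⟩, rfl⟩ := hz
    rcases hy with (⟨γ, hγ, rfl⟩ | ⟨δ, hδ, rfl⟩) | ⟨γ, ⟨hγ, hγ0⟩, rfl⟩
    · refine key _ (B.neg_mem γ hγ.1) ?_ β hβ hβ1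
      rw [map_neg]
      rcases hφ01 γ hγ with h | h <;> simp [h]
    · obtain ⟨n, hn⟩ := B.crystallographic δ (B.Δ_subset δ hδ) (-β) (B.neg_mem β hβ.1)
      rw [hhx δ hδ (-β) (B.neg_mem β hβ.1) n hn]
      refine zsmul_mem (Submodule.subset_span ?_) _
      exact ⟨β, ⟨hβ, hβ1⟩, rfl⟩
    · exact key γ hγ.1 (Or.inl (by simp [hφc γ hγ, hγ0])) β hβ hβ1
  | zero_left z hz => simp
  | zero_right y hy => simp
  | add_left a b z _ _ _ h1 h2 => rw [add_lie]; exact add_mem h1 h2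
  | add_right y a b _ _ _ h1 h2 => rw [lie_add]; exact add_mem h1 h2
  | smul_left r a z _ _ h1 => rw [smul_lie]; exact Submodule.smul_mem _ r h1
  | smul_right r a z _ _ h1 => rw [lie_smul]; exact Submodule.smul_mem _ r h1
end

section
/- With the Chevalley data below over a field K of characteristic zero, assume additionally that C_{α,β} ≠ 0 whenever α, β, α+β ∈ Φ, and that the family {x_{−β} : β ∈ Φ⁺ with c_{α₁}(β) = 1} is linearly independent over K. Set 𝔫 = span_K{x_{−β} : β ∈ Φ⁺ with c_{α₁}(β) = 1} and 𝔭⁻ = span_K({x_{−β} : β ∈ Φ⁺} ∪ {h_δ : δ ∈ Δ} ∪ {x_β : β ∈ Φ⁺ with c_{α₁}(β) = 0}). Then 𝔫 is an irreducible 𝔭⁻-representation under the adjoint action: every K-subspace U ⊆ 𝔫 satisfying ⁅y, u⁆ ∈ U for all y ∈ 𝔭⁻ and u ∈ U is either 0 or equal to 𝔫. -/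
namespace BasedRootSystem

variable {F : Type*} [Field F] [CharZero F] {V : Type*} [AddCommGroup V] [Module F V]

/-- If `⟨α, β∨⟩ > 0` for distinct roots then `α - β` is a root.  Mathlib's version of this fact is
applied to the root pairing induced on the span of `Φ`, the coroots being restricted to it. -/
theorem sub_mem_of_pos (B : BasedRootSystem F V) {α β : V} (hα : α ∈ B.Φ) (hβ : β ∈ B.Φ)
    (hne : α ≠ β) {n : ℤ} (hn : B.coroot β α = (n : F)) (hpos : 0 < n) : α - β ∈ B.Φ := by
  have : Finite B.Φ := B.finite
  have : IsAddTorsionFree V := .of_isTorsionFree F V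
  let r : B.Φ ↪ V := Function.Embedding.subtype _
  let c : B.Φ → Module.Dual F V := fun i => B.coroot i
  have hr : Set.range r = B.Φ := Subtype.range_coe
  have htwo : ∀ i, c i (r i) = 2 := fun i => B.coroot_self i i.2
  have hmaps : ∀ i, Set.MapsTo (Module.preReflection (r i) (c i)) (Set.range r) (Set.range r) := by
    rw [hr]
    intro i v hv
    exact B.reflect_mem i i.2 v hv
  have hinj := Module.injOn_dualMap_subtype_span_range_range (R := F) (r := r) (c := c)
    (Set.finite_range r) htwo hmaps
  let S := Submodule.span F (Set.range r)
  have : FiniteDimensional F S := FiniteDimensional.span_of_finite F (Set.finite_range r)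
  let root : B.Φ ↪ S := ⟨fun i => ⟨r i, Submodule.subset_span ⟨i, rfl⟩⟩, fun i j hij =>
    r.injective (congrArg (fun v : S => (v : V)) hij)⟩
  let coroot : B.Φ ↪ Module.Dual F S := ⟨fun i => S.subtype.dualMap (c i), by
    -- Functionals `c i`, `c j` agreeing on the span are equal by `hinj`; two roots sharing a
    -- coroot then coincide, by finiteness of `Φ`.
    intro i j hij
    have hc : c i = c j := hinj ⟨i, rfl⟩ ⟨j, rfl⟩ hij
    refine r.injective (Module.eq_of_mapsTo_reflection_of_mem (f := c i) (g := c j)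
      (Set.finite_range r) (htwo i) (htwo j) ?_ ?_ (hmaps i) (hmaps j) ⟨j, rfl⟩)
    · rw [← hc, htwo]
    · rw [hc, htwo]⟩
  let P := RootPairing.mk'' (Module.Dual.eval F S) root coroot (fun i => htwo i)
    (by
      rintro i - ⟨j, rfl⟩
      exact ⟨⟨_, B.reflect_mem i i.2 j j.2⟩, rfl⟩)
    (by
      have hroot : Set.range root = (S.subtype : S → V) ⁻¹' Set.range r := by
        ext v
        constructor
        · rintro ⟨i, rfl⟩
          exact ⟨i, rfl⟩
        · rintro ⟨i, hi⟩
          exact ⟨i, Subtype.ext hi⟩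
      rw [hroot]
      exact Submodule.span_span_coe_preimage)
  have hcr : P.IsCrystallographic := ⟨fun i j => by
    obtain ⟨m, hm⟩ := B.crystallographic j j.2 i i.2
    exact ⟨m, hm.symm⟩⟩
  have hp : P.pairingIn ℤ ⟨α, hα⟩ ⟨β, hβ⟩ = n := by
    have h1 := P.algebraMap_pairingIn ℤ ⟨α, hα⟩ ⟨β, hβ⟩
    have h2 : P.pairing ⟨α, hα⟩ ⟨β, hβ⟩ = (n : F) := hn
    rw [h2] at h1
    exact Int.cast_injective (α := F) (by simpa using h1)
  obtain ⟨k, hk⟩ := P.root_sub_root_mem_of_pairingIn_pos (i := ⟨α, hα⟩) (j := ⟨β, hβ⟩)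
    (by rw [hp]; exact hpos) (by simpa using hne)
  have hk' : (k : V) = α - β := congrArg Subtype.val hk
  rw [← hk']
  exact k.2

/-- Coordinate functionals for the base: `φ δ` reads off the coefficient of `δ`. -/
theorem exists_coord (B : BasedRootSystem F V) : ∃ φ : V → (V →ₗ[F] F),
    ∀ f : V → F, ∀ δ ∈ B.Δ, φ δ (∑ ε ∈ B.Δ, f ε • ε) = f δ := by
  classical
  obtain ⟨g, hg⟩ := LinearMap.exists_leftInverse_of_injective _
    (LinearMap.ker_eq_bot.mpr B.Δ_linearIndependent)
  refine ⟨fun δ => if h : δ ∈ B.Δ then Finsupp.lapply ⟨δ, h⟩ ∘ₗ g else 0, fun f δ hδ => ?_⟩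
  have key : ∀ ε : {v : V // v ∈ B.Δ}, g (ε : V) = Finsupp.single ε 1 := fun ε => by
    simpa using LinearMap.congr_fun hg (Finsupp.single ε 1)
  rw [← Finset.sum_coe_sort]
  simp only [hδ, dif_pos, LinearMap.comp_apply, map_sum, map_smul, key, Finsupp.lapply_apply]
  rw [Finset.sum_eq_single ⟨δ, hδ⟩] <;> simp +contextual

/-- A positive root is simple or remains a root after subtracting a suitable simple root:
`2 = ⟨β, β∨⟩` forces some simple `δ` to have `⟨δ, β∨⟩ > 0`. -/
theorem exists_simple_sub (B : BasedRootSystem F V) {β : V} (hβ : β ∈ B.Pos) :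
    ∃ δ ∈ B.Δ, β = δ ∨ β - δ ∈ B.Φ := by
  obtain ⟨hΦ, f, hf⟩ := hβ
  choose! n hn using fun δ hδ => B.crystallographic β hΦ δ (B.Δ_subset δ hδ)
  have hsum : ∑ δ ∈ B.Δ, (f δ : ℤ) * n δ = 2 := by
    have h2 := B.coroot_self β hΦ
    have h3 : B.coroot β β = ∑ δ ∈ B.Δ, (f δ : F) * (n δ : F) := by
      conv_lhs => rw [congrArg (B.coroot β) hf]
      rw [map_sum]
      exact Finset.sum_congr rfl fun δ hδ => by rw [map_smul, hn δ hδ, smul_eq_mul]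
    rw [h3] at h2
    exact_mod_cast h2
  obtain ⟨δ, hδ, hpos⟩ : ∃ δ ∈ B.Δ, 0 < n δ := by
    by_contra! hcon
    have := Finset.sum_nonpos fun δ hδ =>
      mul_nonpos_of_nonneg_of_nonpos (Int.natCast_nonneg (f δ)) (hcon δ hδ)
    omega
  refine ⟨δ, hδ, or_iff_not_imp_left.mpr fun hne => ?_⟩
  have := B.neg_mem _ (B.sub_mem_of_pos (B.Δ_subset δ hδ) hΦ (Ne.symm hne) (hn δ hδ) hpos)
  rwa [neg_sub] at this

theorem simple_mem_pos (B : BasedRootSystem F V) {δ : V} (hδ : δ ∈ B.Δ) : δ ∈ B.Pos := by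
  classical
  exact ⟨B.Δ_subset δ hδ, fun ε => if ε = δ then 1 else 0, by simp [hδ]⟩

variable (B : BasedRootSystem F V) {c : V → V → ℕ}
  (hc : ∀ β ∈ B.Pos, β = ∑ δ ∈ B.Δ, (c δ β : F) • δ)

include hc

/-- Coefficients with respect to the base are unique. -/
theorem coeff_eq {β : V} (hβ : β ∈ B.Pos) {f : V → F} (hf : β = ∑ δ ∈ B.Δ, f δ • δ)
    {δ : V} (hδ : δ ∈ B.Δ) : (c δ β : F) = f δ := by
  obtain ⟨φ, hφ⟩ := B.exists_coord
  rw [← hφ (fun ε => (c ε β : F)) δ hδ, ← hc β hβ, ← hφ f δ hδ, ← hf]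

theorem coeff_add {α β : V} (hα : α ∈ B.Pos) (hβ : β ∈ B.Pos) (hαβ : α + β ∈ B.Pos)
    {δ : V} (hδ : δ ∈ B.Δ) : c δ (α + β) = c δ α + c δ β := by
  have := B.coeff_eq hc hαβ (f := fun ε => (c ε α : F) + (c ε β : F)) (by
    simp only [add_smul, Finset.sum_add_distrib]
    rw [← hc α hα, ← hc β hβ]) hδ
  exact_mod_cast this

theorem coeff_simple [DecidableEq V] {δ ε : V} (hδ : δ ∈ B.Δ) (hε : ε ∈ B.Δ) :
    c ε δ = if ε = δ then 1 else 0 := by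
  have := B.coeff_eq hc (B.simple_mem_pos hδ) (f := fun ε => if ε = δ then 1 else 0)
    (by simp [hδ]) hε
  split_ifs at this ⊢ <;> exact_mod_cast this

theorem height_pos {β : V} (hβ : β ∈ B.Pos) : 0 < ∑ δ ∈ B.Δ, c δ β := by
  rw [Nat.pos_iff_ne_zero, Ne, Finset.sum_eq_zero_iff]
  intro h0
  refine B.zero_not_mem ?_
  have : β = 0 := by
    rw [hc β hβ]
    exact Finset.sum_eq_zero fun δ hδ => by simp [h0 δ hδ]
  exact this ▸ hβ.1

/-- Subtracting from a positive root with `δ`-coefficient `1` a positive root with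
`δ`-coefficient `0` yields, if a root at all, a positive root with `δ`-coefficient `1`. -/
theorem sub_mem_pos {δ β γ : V} (hδ : δ ∈ B.Δ) (hβ : β ∈ B.Pos) (hβ1 : c δ β = 1)
    (hγ : γ ∈ B.Pos) (hγ0 : c δ γ = 0) (hsub : β - γ ∈ B.Φ) :
    β - γ ∈ B.Pos ∧ c δ (β - γ) = 1 := by
  have hpos : β - γ ∈ B.Pos := by
    refine ⟨hsub, (B.decomp _ hsub).resolve_right ?_⟩
    rintro ⟨f, hf⟩
    have := B.coeff_eq hc hβ (f := fun ε => (c ε γ : F) - (f ε : F)) (by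
      simp only [sub_smul, Finset.sum_sub_distrib]
      rw [← hc γ hγ, sub_eq_add_neg, ← hf]
      abel) hδ
    rw [hβ1, hγ0, Nat.cast_one, Nat.cast_zero, eq_sub_iff_add_eq] at this
    have : 1 + f δ = 0 := by exact_mod_cast this
    omega
  have := B.coeff_add hc hpos hγ (by simpa using hβ) hδ
  rw [sub_add_cancel] at this
  exact ⟨hpos, by omega⟩

theorem exists_split {α₁ β : V} (hα₁ : α₁ ∈ B.Δ) (hβ : β ∈ B.Pos) (hβ1 : c α₁ β = 1)
    (hne : β ≠ α₁) : ∃ γ ∈ B.Pos, c α₁ γ = 0 ∧ β - γ ∈ B.Pos ∧ c α₁ (β - γ) = 1 := by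
  classical
  obtain ⟨δ, hδ, hδβ⟩ := B.exists_simple_sub hβ
  by_cases hδ1 : δ = α₁
  · subst hδ1
    have hΦ := hδβ.resolve_left hne
    have hδδ : c δ δ = 1 := by simp [B.coeff_simple hc hδ hδ]
    have hpos : β - δ ∈ B.Pos := by
      refine ⟨hΦ, (B.decomp _ hΦ).resolve_right ?_⟩
      rintro ⟨f, hf⟩
      -- All coefficients of `β` other than the one at `δ` would be nonpositive, so `β = δ`.
      have key : ∀ ε ∈ B.Δ, ε ≠ δ → c ε β = 0 := by
        intro ε hε hεδ
        have := B.coeff_eq hc hβ (f := fun ε => (c ε δ : F) - (f ε : F)) (by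
          simp only [sub_smul, Finset.sum_sub_distrib]
          rw [← hc δ (B.simple_mem_pos hδ), sub_eq_add_neg, ← hf]
          abel) hε
        rw [B.coeff_simple hc hδ hε, if_neg hεδ, Nat.cast_zero, eq_sub_iff_add_eq] at this
        have : c ε β + f ε = 0 := by exact_mod_cast this
        omega
      refine hne ?_
      rw [hc β hβ, Finset.sum_eq_single_of_mem δ hδ fun ε hε hεδ => by simp [key ε hε hεδ], hβ1]
      simp
    have hadd := B.coeff_add hc hpos (B.simple_mem_pos hδ) (by simpa using hβ) hδ
    rw [sub_add_cancel] at hadd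
    refine ⟨β - δ, hpos, by omega, ?_⟩
    rw [sub_sub_cancel]
    exact ⟨B.simple_mem_pos hδ, hδδ⟩
  · have h0 : c α₁ δ = 0 := by simp [B.coeff_simple hc hδ hα₁, Ne.symm hδ1]
    have hΦ : β - δ ∈ B.Φ := hδβ.resolve_left fun h => by
      rw [h, h0] at hβ1
      exact zero_ne_one hβ1
    have hp := B.simple_mem_pos hδ
    exact ⟨δ, hp, h0, B.sub_mem_pos hc hα₁ hβ hβ1 hp h0 hΦ⟩

end BasedRootSystem

/-- Descent to the lowest root.  Suppose every `β ∈ N` other than `α₁` admits a `γ` with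
`β - γ ∈ N` such that `ad x_γ` preserves `U`, shifts `x_{-β'}` to a nonzero multiple of
`x_{-(β' - γ)}`, or to zero if `β' - γ ∉ N`, and lowers heights.  Then `U` contains `x_{-α₁}` as
soon as it contains some combination of the `x_{-β}` with coefficients `a` not all zero on `N`. -/
theorem lowest_mem {V K L : Type*} [AddCommGroup V] [Field K] [LieRing L] [LieAlgebra K L]
    (N : Finset V) (x : V → L) (ht : V → ℕ) (α₁ : V) (U : Submodule K L)
    (step : ∀ β ∈ N, β ≠ α₁ → ∃ γ, ∃ k : V → K, β - γ ∈ N ∧ (∀ u ∈ U, ⁅x γ, u⁆ ∈ U) ∧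
      (∀ β' ∈ N, β' - γ ∈ N → ht (β' - γ) < ht β' ∧ k β' ≠ 0 ∧
        ⁅x γ, x (-β')⁆ = k β' • x (-(β' - γ))) ∧
      (∀ β' ∈ N, β' - γ ∉ N → ⁅x γ, x (-β')⁆ = 0)) (n : ℕ) :
    ∀ a : V → K, (∀ β ∈ N, a β ≠ 0 → ht β < n) → (∃ β ∈ N, a β ≠ 0) →
      ∑ β ∈ N, a β • x (-β) ∈ U → x (-α₁) ∈ U := by
  classical
  induction n with
  | zero =>
    rintro a hlt ⟨β, hβ, haβ⟩ -
    exact absurd (hlt β hβ haβ) (Nat.not_lt_zero _)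
  | succ n ih =>
    rintro a hlt ⟨β, hβ, haβ⟩ hU
    by_cases hall : ∀ β' ∈ N, β' ≠ α₁ → a β' = 0
    · have hβα : β = α₁ := by
        by_contra hne
        exact haβ (hall β hβ hne)
      subst hβα
      rw [Finset.sum_eq_single_of_mem β hβ fun ε hε hne => by rw [hall ε hε hne, zero_smul]] at hU
      exact (U.smul_mem_iff haβ).mp hU
    · push Not at hall
      obtain ⟨β, hβ, hne, haβ⟩ := hall
      obtain ⟨γ, k, hβγ, hγU, hshift, hzero⟩ := step β hβ hne
      -- The coefficients of `⁅x_γ, u⁆`, supported on the shift of the support of `a` by `-γ`.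
      refine ih (fun ε => if ε + γ ∈ N then a (ε + γ) * k (ε + γ) else 0) ?_ ?_ ?_
      · intro ε hε h0
        split_ifs at h0 with hmem
        · have h1 := hlt _ hmem (left_ne_zero_of_mul h0)
          have h2 := (hshift _ hmem (by simpa using hε)).1
          rw [add_sub_cancel_right] at h2
          omega
        · exact absurd rfl h0
      · refine ⟨β - γ, hβγ, ?_⟩
        simp only [sub_add_cancel, hβ, if_true]
        exact mul_ne_zero haβ (hshift β hβ hβγ).2.1
      · convert hγU _ hU using 1
        rw [lie_sum]
        simp only [ite_smul, zero_smul]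
        rw [← Finset.sum_filter]
        have hR : ∑ β ∈ N, ⁅x γ, a β • x (-β)⁆ =
            ∑ β ∈ N with β - γ ∈ N, (a β * k β) • x (-(β - γ)) := by
          rw [Finset.sum_filter]
          refine Finset.sum_congr rfl fun ε hε => ?_
          split_ifs with hmem
          · rw [lie_smul, (hshift ε hε hmem).2.2, smul_smul]
          · rw [lie_smul, hzero ε hε hmem, smul_zero]
        rw [hR]
        refine Finset.sum_nbij' (· + γ) (· - γ) ?_ ?_ ?_ ?_ ?_ <;> simp +contextual

/-- Generation from the lowest root: if `U` contains `x_{-α₁}` and every other `x_{-β}` with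
`β ∈ N` is obtained, up to a nonzero scalar, by applying some `ad x_{-γ}` preserving `U` to some
`x_{-(β - γ)}` of smaller height, then `U` contains every `x_{-β}`. -/
theorem all_mem {V K L : Type*} [AddCommGroup V] [Field K] [LieRing L] [LieAlgebra K L]
    (N : Set V) (x : V → L) (ht : V → ℕ) (α₁ : V) (U : Submodule K L) (h1 : x (-α₁) ∈ U)
    (step : ∀ β ∈ N, β ≠ α₁ → ∃ γ, ∃ k : K, β - γ ∈ N ∧ ht (β - γ) < ht β ∧ k ≠ 0 ∧
      (∀ u ∈ U, ⁅x (-γ), u⁆ ∈ U) ∧ ⁅x (-γ), x (-(β - γ))⁆ = k • x (-β)) :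
    ∀ β ∈ N, x (-β) ∈ U := by
  intro β
  induction hn : ht β using Nat.strong_induction_on generalizing β with
  | _ n ih =>
    intro hβ
    by_cases hne : β = α₁
    · rwa [hne]
    · obtain ⟨γ, k, hN, hlt, hk, hU, hbr⟩ := step β hβ hne
      have := hU _ (ih _ (hn ▸ hlt) _ rfl hN)
      rw [hbr] at this
      exact (U.smul_mem_iff hk).mp this

/-- For a Chevalley system over a field `K` of characteristic zero with all
structure constants `C_{α,β}` nonzero (for `α, β, α+β ∈ Φ`), if every positive
root has `α₁`-coefficient `0` or `1` and the `x_{−β}` (for `β ∈ Φ⁺` with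
`c_{α₁}(β) = 1`) are linearly independent, then
`𝔫 = span{x_{−β} : β ∈ Φ⁺, c_{α₁}(β) = 1}` is irreducible as a representation of
`𝔭⁻ = span({x_{−β} : β ∈ Φ⁺} ∪ {h_δ : δ ∈ Δ} ∪ {x_β : β ∈ Φ⁺, c_{α₁}(β) = 0})`
under the adjoint action: every subspace `U ⊆ 𝔫` with `⁅𝔭⁻, U⁆ ⊆ U` is `0` or `𝔫`. -/
theorem statement12 {F : Type*} [Field F] [CharZero F] {V : Type*} [AddCommGroup V]
    [Module F V] (B : BasedRootSystem F V)
    (c : V → V → ℕ)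
    (hc : ∀ β ∈ B.Pos, β = ∑ δ ∈ B.Δ, (c δ β : F) • δ)
    {K : Type*} [Field K] [CharZero K] {L : Type*} [LieRing L] [LieAlgebra K L]
    (x : V → L) (h : V → L) (C : V → V → ℤ)
    (hhh : ∀ δ ∈ B.Δ, ∀ δ' ∈ B.Δ, ⁅h δ, h δ'⁆ = 0)
    (hhx : ∀ δ ∈ B.Δ, ∀ α ∈ B.Φ, ∀ n : ℤ, B.coroot δ α = (n : F) → ⁅h δ, x α⁆ = n • x α)
    (hxx_mem : ∀ α ∈ B.Φ, ∀ β ∈ B.Φ, α + β ≠ 0 → α + β ∈ B.Φ →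
      ⁅x α, x β⁆ = C α β • x (α + β))
    (hxx_nmem : ∀ α ∈ B.Φ, ∀ β ∈ B.Φ, α + β ≠ 0 → α + β ∉ B.Φ → ⁅x α, x β⁆ = 0)
    (hxnx : ∀ α ∈ B.Φ, ⁅x α, x (-α)⁆ ∈ Submodule.span K (h '' (B.Δ : Set V)))
    (hC : ∀ α ∈ B.Φ, ∀ β ∈ B.Φ, α + β ∈ B.Φ → C α β ≠ 0)
    (α₁ : V) (hα₁ : α₁ ∈ B.Δ)
    (hcoeff : ∀ β ∈ B.Pos, c α₁ β = 0 ∨ c α₁ β = 1)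
    (hind : LinearIndependent K
      (fun β : {β : V // β ∈ B.Pos ∧ c α₁ β = 1} => x (-(β : V)))) :
    ∀ U : Submodule K L,
      U ≤ Submodule.span K ((fun β => x (-β)) '' {β | β ∈ B.Pos ∧ c α₁ β = 1}) →
      (∀ y ∈ Submodule.span K
          (((fun β => x (-β)) '' B.Pos) ∪ (h '' (B.Δ : Set V)) ∪
            (x '' {β | β ∈ B.Pos ∧ c α₁ β = 0})),
        ∀ u ∈ U, ⁅y, u⁆ ∈ U) →
      U = ⊥ ∨ U = Submodule.span K ((fun β => x (-β)) '' {β | β ∈ B.Pos ∧ c α₁ β = 1}) := by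
  intro U hUle hU
  set N : Set V := {β | β ∈ B.Pos ∧ c α₁ β = 1} with hN
  have hNfin : N.Finite := B.finite.subset fun β hβ => hβ.1.1
  let ht : V → ℕ := fun β => ∑ δ ∈ B.Δ, c δ β
  have hht : ∀ β γ, β ∈ N → γ ∈ B.Pos → β - γ ∈ N → ht (β - γ) < ht β := by
    intro β γ hβ hγ hβγ
    have hadd : ht β = ht (β - γ) + ht γ := by
      simp only [ht, ← Finset.sum_add_distrib]
      refine Finset.sum_congr rfl fun δ hδ => ?_
      rw [← B.coeff_add hc hβγ.1 hγ (by simpa using hβ.1) hδ, sub_add_cancel]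
    have : 0 < ht γ := B.height_pos hc hγ
    omega
  have hUneg : ∀ γ ∈ B.Pos, ∀ u ∈ U, ⁅x (-γ), u⁆ ∈ U := fun γ hγ =>
    hU _ (Submodule.subset_span (Or.inl (Or.inl ⟨γ, hγ, rfl⟩)))
  have hUpos : ∀ γ ∈ B.Pos, c α₁ γ = 0 → ∀ u ∈ U, ⁅x γ, u⁆ ∈ U := fun γ hγ h0 =>
    hU _ (Submodule.subset_span (Or.inr ⟨γ, ⟨hγ, h0⟩, rfl⟩))
  have hne0 : ∀ v ∈ B.Φ, v ≠ 0 := fun v hv h0 => B.zero_not_mem (h0 ▸ hv)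
  refine or_iff_not_imp_left.mpr fun hbot => le_antisymm hUle ?_
  obtain ⟨u, huU, hu0⟩ := U.ne_bot_iff.mp hbot
  have hlow : x (-α₁) ∈ U := by
    have hu := hUle huU
    rw [← hNfin.coe_toFinset, Submodule.mem_span_image_finset_iff_exists_fun'] at hu
    obtain ⟨a, ha⟩ := hu
    refine lowest_mem hNfin.toFinset x ht α₁ U ?_
      (∑ β ∈ hNfin.toFinset, ht β + 1) a ?_ ?_ (ha ▸ huU)
    · simp only [Set.Finite.mem_toFinset]
      intro β hβ hne
      obtain ⟨γ, hγ, hγ0, hβγ⟩ := B.exists_split hc hα₁ hβ.1 hβ.2 hne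
      -- `γ - β'` is never zero, since `β'` and `γ` have different `α₁`-coefficients.
      have hsum : ∀ β' ∈ N, γ + -β' ≠ 0 := by
        intro β' hβ' h0
        have : γ = β' := by rwa [← sub_eq_add_neg, sub_eq_zero] at h0
        have h1 := hβ'.2
        rw [← this, hγ0] at h1
        exact zero_ne_one h1
      have heq : ∀ β' : V, γ + -β' = -(β' - γ) := fun β' => by abel
      refine ⟨γ, fun β' => (C γ (-β') : K), hβγ, hUpos γ hγ hγ0, fun β' hβ' hβ'γ => ?_,
        fun β' hβ' hβ'γ => ?_⟩
      · have hmem : γ + -β' ∈ B.Φ := heq β' ▸ B.neg_mem _ hβ'γ.1.1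
        refine ⟨hht β' γ hβ' hγ hβ'γ, ?_, ?_⟩
        · exact Int.cast_ne_zero.mpr <| hC γ hγ.1 (-β') (B.neg_mem _ hβ'.1.1) hmem
        · rw [hxx_mem γ hγ.1 (-β') (B.neg_mem _ hβ'.1.1) (hsum β' hβ') hmem, heq,
            Int.cast_smul_eq_zsmul]
      · refine hxx_nmem γ hγ.1 (-β') (B.neg_mem _ hβ'.1.1) (hsum β' hβ') fun hmem => hβ'γ ?_
        refine B.sub_mem_pos hc hα₁ hβ'.1 hβ'.2 hγ hγ0 ?_
        have := B.neg_mem _ hmem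
        rwa [heq, neg_neg] at this
    · intro β hβ _
      have := Finset.single_le_sum (f := ht) (fun _ _ => Nat.zero_le _) hβ
      omega
    · by_contra! h0
      refine hu0 ?_
      rw [← ha]
      exact Finset.sum_eq_zero fun β hβ => by rw [h0 β hβ, zero_smul]
  rw [Submodule.span_le]
  rintro - ⟨β, hβ, rfl⟩
  refine all_mem N x ht α₁ U hlow (fun β hβ hne => ?_) β hβ
  obtain ⟨γ, hγ, hγ0, hβγ⟩ := B.exists_split hc hα₁ hβ.1 hβ.2 hne
  have heq : -γ + -(β - γ) = -β := by abel
  have hmem : -γ + -(β - γ) ∈ B.Φ := heq ▸ B.neg_mem _ hβ.1.1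
  have hγΦ := B.neg_mem _ hγ.1
  have hβγΦ := B.neg_mem _ hβγ.1.1
  refine ⟨γ, (C (-γ) (-(β - γ)) : K), hβγ, hht β γ hβ hγ hβγ, ?_, hUneg γ hγ, ?_⟩
  · exact_mod_cast hC _ hγΦ _ hβγΦ hmem
  · rw [hxx_mem _ hγΦ _ hβγΦ (hne0 _ hmem) hmem, heq, Int.cast_smul_eq_zsmul]
end

section
/- With the Chevalley data below over a field K of characteristic zero, let M be a Lie module over L, let a ∈ ℕ, and let w ∈ M satisfy x_{−γ} • w = 0 for every γ ∈ Φ⁺ with c_{α₁}(γ) = 0. Set v = x_{−α₁}^{a+1} • w, and let U be the K-span of all vectors x_{−γ_1} • (x_{−γ_2} • (⋯ • (x_{−γ_s} • v)⋯)) with s ≥ 0 and γ_1, …, γ_s ∈ Φ⁺ each having c_{α₁}(γ_i) = 1. Then for every r ≥ 1, all β_1, …, β_r ∈ Φ⁺, and every u ∈ U, one has x_{−α₁}^r • (x_{−β_1} • (x_{−β_2} • (⋯ • (x_{−β_r} • u)⋯))) ∈ U. -/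
namespace BasedRootSystem

variable {F : Type*} [Field F] [CharZero F] {V : Type*} [AddCommGroup V] [Module F V]

/-- There is a linear functional on `V` reading off the `δ₀`-coefficient of any combination of
simple roots. -/
lemma exists_coeff (B : BasedRootSystem F V) {δ₀ : V} (hδ₀ : δ₀ ∈ B.Δ) :
    ∃ φ : V →ₗ[F] F, ∀ c : V → ℕ, φ (∑ δ ∈ B.Δ, (c δ : F) • δ) = (c δ₀ : F) := by
  classical
  let b := Module.Basis.extend (B.Δ_linearIndependent.linearIndepOn_id)
  have hmem : ∀ δ ∈ B.Δ, δ ∈ (B.Δ_linearIndependent.linearIndepOn_id).extend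
      (Set.subset_univ _) := fun δ hδ =>
    LinearIndepOn.subset_extend _ _ ⟨⟨δ, hδ⟩, rfl⟩
  refine ⟨b.coord ⟨δ₀, hmem δ₀ hδ₀⟩, fun c => ?_⟩
  have key : ∀ δ ∈ B.Δ, b.coord ⟨δ₀, hmem δ₀ hδ₀⟩ δ = if δ = δ₀ then 1 else 0 := by
    intro δ hδ
    have hb : b ⟨δ, hmem δ hδ⟩ = δ := Module.Basis.extend_apply_self _ _
    conv_lhs => rw [← hb]
    rw [Module.Basis.coord_apply, Module.Basis.repr_self, Finsupp.single_apply]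
    simp [Subtype.ext_iff]
  rw [map_sum, Finset.sum_eq_single δ₀]
  · rw [map_smul, key δ₀ hδ₀]; simp
  · intro δ hδ hne
    rw [map_smul, key δ hδ]; simp [hne]
  · exact fun h => absurd hδ₀ h

end BasedRootSystem

section Filtration

variable {K : Type*} [Field K] {L : Type*} [LieRing L]
  {M : Type*} [AddCommGroup M] [Module K M] [LieRingModule L M]
  {V : Type*}

/-- The span of all `z γ₁ • ⋯ • z γ_s • (z α)^k • w` with `γ_i ∈ S`. -/
def filt (K : Type*) [Field K] {L : Type*} [LieRing L]
    {M : Type*} [AddCommGroup M] [Module K M] [LieRingModule L M] {V : Type*}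
    (z : V → L) (S : V → Prop) (α : V) (w : M) (k : ℕ) : Submodule K M :=
  Submodule.span K {m : M | ∃ l : List V, (∀ γ ∈ l, S γ) ∧
    m = l.foldr (fun γ m' => ⁅z γ, m'⁆) ((fun m' => ⁅z α, m'⁆)^[k] w)}

variable {z : V → L} {S : V → Prop} {α : V} {w : M}

lemma iterate_mem_filt (k : ℕ) : (fun m' => ⁅z α, m'⁆)^[k] w ∈ filt K z S α w k :=
  Submodule.subset_span ⟨[], by simp, rfl⟩

lemma filt_antitone (hα : S α) : Antitone (filt K z S α w) := by
  refine antitone_nat_of_succ_le fun k => Submodule.span_mono ?_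
  rintro _ ⟨l, hl, rfl⟩
  refine ⟨l ++ [α], ?_, ?_⟩
  · intro γ hγ
    rcases List.mem_append.1 hγ with h | h
    · exact hl γ h
    · rw [List.mem_singleton.1 h]; exact hα
  · rw [List.foldr_append, Function.iterate_succ_apply']; rfl

variable [LieAlgebra K L] [LieModule K L M]

/-- To check that an element of `L` maps `filt … k` into a submodule, it suffices to look at
monomials. -/
lemma lie_mem_of_foldr (y : L) {k : ℕ} {P : Submodule K M}
    (H : ∀ l : List V, (∀ γ ∈ l, S γ) →
      ⁅y, l.foldr (fun γ m' => ⁅z γ, m'⁆) ((fun m' => ⁅z α, m'⁆)^[k] w)⁆ ∈ P)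
    {m : M} (hm : m ∈ filt K z S α w k) : ⁅y, m⁆ ∈ P := by
  have : filt K z S α w k ≤ P.comap (LieModule.toEnd K L M y) := by
    refine Submodule.span_le.2 ?_
    rintro _ ⟨l, hl, rfl⟩
    exact H l hl
  exact this hm

lemma lie_mem_filt {γ : V} (hγ : S γ) {k : ℕ} {m : M} (hm : m ∈ filt K z S α w k) :
    ⁅z γ, m⁆ ∈ filt K z S α w k := by
  refine lie_mem_of_foldr _ (fun l hl => ?_) hm
  exact Submodule.subset_span ⟨γ :: l, List.forall_mem_cons.2 ⟨hγ, hl⟩, rfl⟩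

lemma lie_mem_filt_succ (hcomm : ∀ γ, S γ → ⁅z α, z γ⁆ = 0) {k : ℕ} {m : M}
    (hm : m ∈ filt K z S α w k) : ⁅z α, m⁆ ∈ filt K z S α w (k + 1) := by
  refine lie_mem_of_foldr _ (fun l hl => ?_) hm
  induction l with
  | nil =>
    simp only [List.foldr_nil]
    rw [← Function.iterate_succ_apply' (fun m' : M => ⁅z α, m'⁆)]
    exact iterate_mem_filt _
  | cons γ l ih =>
    simp only [List.mem_cons, forall_eq_or_imp] at hl
    rw [List.foldr_cons, leibniz_lie, hcomm γ hl.1, zero_lie, zero_add]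
    exact lie_mem_filt hl.1 (ih hl.2)

/-- An element `y` killing `w` and sending each `z γ`, `γ ∈ S`, under the bracket to zero or to an
integer multiple of some such `z γ'`, lowers the index of
the filtration by at most one (truncated subtraction: at index `0` the step is preserved). -/
lemma lie_mem_filt_pred (hα : S α) (hcomm : ∀ γ, S γ → ⁅z α, z γ⁆ = 0) {y : L}
    (hyw : ⁅y, w⁆ = 0)
    (hy : ∀ γ, S γ → ⁅y, z γ⁆ = 0 ∨ ∃ (n : ℤ) (γ' : V), S γ' ∧ ⁅y, z γ⁆ = n • z γ')
    {k : ℕ} {m : M} (hm : m ∈ filt K z S α w k) : ⁅y, m⁆ ∈ filt K z S α w (k - 1) := by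
  have hbr : ∀ γ, S γ → ∀ j, ∀ m ∈ filt K z S α w j, ⁅⁅y, z γ⁆, m⁆ ∈ filt K z S α w j := by
    intro γ hγ j m hm
    rcases hy γ hγ with h | ⟨n, γ', hγ', h⟩
    · rw [h, zero_lie]; exact zero_mem _
    · rw [h, zsmul_lie]; exact zsmul_mem (lie_mem_filt hγ' hm) n
  refine lie_mem_of_foldr _ (fun l hl => ?_) hm
  induction l with
  | nil =>
    simp only [List.foldr_nil]
    clear hm
    induction k with
    | zero => simp [hyw]
    | succ k ih =>
      rw [Function.iterate_succ_apply', leibniz_lie]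
      refine add_mem (hbr α hα _ _ (iterate_mem_filt _)) ?_
      exact filt_antitone hα (by omega) (lie_mem_filt_succ hcomm ih)
  | cons γ l ih =>
    simp only [List.mem_cons, forall_eq_or_imp] at hl
    rw [List.foldr_cons, leibniz_lie]
    refine add_mem (hbr γ hl.1 _ _ ?_) (lie_mem_filt hl.1 (ih hl.2))
    exact filt_antitone hα (Nat.sub_le k 1) (Submodule.subset_span ⟨l, hl.2, rfl⟩)

end Filtration

/-- Let `w` be a vector killed by `x_{−γ}` for every positive root `γ` with
`c_{α₁}(γ) = 0`, let `v = x_{−α₁}^{a+1} • w`, and let `U` be the span of all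
`x_{−γ₁} • (⋯ • (x_{−γ_s} • v))` with each `γ_i ∈ Φ⁺` of `α₁`-coefficient `1`.
Then for every `r ≥ 1` and all positive roots `β₁, …, β_r`,
`x_{−α₁}^r • (x_{−β₁} • (⋯ • (x_{−β_r} • U))) ⊆ U`. -/
theorem statement14 {F : Type*} [Field F] [CharZero F] {V : Type*} [AddCommGroup V]
    [Module F V] (B : BasedRootSystem F V)
    (c : V → V → ℕ)
    (hc : ∀ β ∈ B.Pos, β = ∑ δ ∈ B.Δ, (c δ β : F) • δ)
    {K : Type*} [Field K] [CharZero K] {L : Type*} [LieRing L] [LieAlgebra K L]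
    (x : V → L) (h : V → L) (C : V → V → ℤ)
    (hhh : ∀ δ ∈ B.Δ, ∀ δ' ∈ B.Δ, ⁅h δ, h δ'⁆ = 0)
    (hhx : ∀ δ ∈ B.Δ, ∀ α ∈ B.Φ, ∀ n : ℤ, B.coroot δ α = (n : F) → ⁅h δ, x α⁆ = n • x α)
    (hxx_mem : ∀ α ∈ B.Φ, ∀ β ∈ B.Φ, α + β ≠ 0 → α + β ∈ B.Φ →
      ⁅x α, x β⁆ = C α β • x (α + β))
    (hxx_nmem : ∀ α ∈ B.Φ, ∀ β ∈ B.Φ, α + β ≠ 0 → α + β ∉ B.Φ → ⁅x α, x β⁆ = 0)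
    (hxnx : ∀ α ∈ B.Φ, ⁅x α, x (-α)⁆ ∈ Submodule.span K (h '' (B.Δ : Set V)))
    (α₁ : V) (hα₁ : α₁ ∈ B.Δ)
    (hcoeff : ∀ β ∈ B.Pos, c α₁ β = 0 ∨ c α₁ β = 1)
    {M : Type*} [AddCommGroup M] [Module K M] [LieRingModule L M] [LieModule K L M]
    (a : ℕ) (w : M)
    (hw : ∀ γ ∈ B.Pos, c α₁ γ = 0 → ⁅x (-γ), w⁆ = 0) :
    ∀ r : ℕ, 1 ≤ r → ∀ βs : Fin r → V, (∀ i, βs i ∈ B.Pos) →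
      ∀ u ∈ Submodule.span K
          {m : M | ∃ l : List V, (∀ γ ∈ l, γ ∈ B.Pos ∧ c α₁ γ = 1) ∧
            m = l.foldr (fun γ m' => ⁅x (-γ), m'⁆)
              ((fun m' => ⁅x (-α₁), m'⁆)^[a + 1] w)},
        (fun m' => ⁅x (-α₁), m'⁆)^[r]
            ((List.ofFn βs).foldr (fun γ m' => ⁅x (-γ), m'⁆) u) ∈
          Submodule.span K
          {m : M | ∃ l : List V, (∀ γ ∈ l, γ ∈ B.Pos ∧ c α₁ γ = 1) ∧
            m = l.foldr (fun γ m' => ⁅x (-γ), m'⁆)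
              ((fun m' => ⁅x (-α₁), m'⁆)^[a + 1] w)} := by
  classical
  obtain ⟨φ, hφ⟩ := B.exists_coeff hα₁
  have hφpos : ∀ β ∈ B.Pos, φ β = (c α₁ β : F) := by
    intro β hβ
    conv_lhs => rw [hc β hβ]
    exact hφ (fun δ => c δ β)
  -- A root whose `α₁`-coefficient is a positive integer is a positive root.
  have hposof : ∀ γ ∈ B.Φ, ∀ n : ℕ, φ γ = ((n + 1 : ℕ) : F) →
      γ ∈ B.Pos ∧ c α₁ γ = n + 1 := by
    intro γ hγ n hn
    have hp : γ ∈ B.Pos := by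
      rcases B.decomp γ hγ with h' | ⟨d, hd⟩
      · exact ⟨hγ, h'⟩
      · exfalso
        have h2 : φ γ = -(d α₁ : F) := by
          conv_lhs => rw [hd]
          rw [map_neg, hφ]
        rw [hn] at h2
        have h3 : ((n + 1 + d α₁ : ℕ) : F) = 0 := by
          push_cast at h2 ⊢
          rw [h2]; ring
        have := Nat.cast_eq_zero.1 h3
        omega
    refine ⟨hp, ?_⟩
    have := hφpos γ hp
    rw [hn] at this
    exact (Nat.cast_injective this).symm
  have hα₁S : α₁ ∈ B.Pos ∧ c α₁ α₁ = 1 := by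
    refine hposof α₁ (B.Δ_subset _ hα₁) 0 ?_
    have := hφ (fun δ => if δ = α₁ then 1 else 0)
    simpa [Finset.sum_ite_eq', hα₁] using this
  have hbr : ∀ β ∈ B.Pos, ∀ γ, γ ∈ B.Pos ∧ c α₁ γ = 1 →
      ⁅x (-β), x (-γ)⁆ = 0 ∨ (∃ n : ℤ, (β + γ ∈ B.Pos ∧ c α₁ (β + γ) = c α₁ β + 1) ∧
        ⁅x (-β), x (-γ)⁆ = n • x (-(β + γ))) := by
    intro β hβ γ hγ
    have hsum : φ (β + γ) = ((c α₁ β + 1 : ℕ) : F) := by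
      rw [map_add, hφpos β hβ, hφpos γ hγ.1, hγ.2]; push_cast; rfl
    have heq : -β + -γ = -(β + γ) := (neg_add β γ).symm
    have hne : -β + -γ ≠ 0 := by
      intro h0
      rw [heq, neg_eq_zero] at h0
      rw [h0, map_zero] at hsum
      exact absurd (Nat.cast_eq_zero.1 hsum.symm) (by omega)
    by_cases hmem : -β + -γ ∈ B.Φ
    · right
      refine ⟨C (-β) (-γ), hposof _ ?_ _ hsum, ?_⟩
      · have := B.neg_mem _ hmem
        rwa [heq, neg_neg] at this
      · rw [hxx_mem _ (B.neg_mem _ hβ.1) _ (B.neg_mem _ hγ.1.1) hne hmem, heq]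
    · left
      exact hxx_nmem _ (B.neg_mem _ hβ.1) _ (B.neg_mem _ hγ.1.1) hne hmem
  let S : V → Prop := fun γ => γ ∈ B.Pos ∧ c α₁ γ = 1
  let z : V → L := fun γ => x (-γ)
  have hcomm : ∀ γ, S γ → ⁅z α₁, z γ⁆ = 0 := by
    intro γ hγ
    rcases hbr α₁ hα₁S.1 γ hγ with h' | ⟨n, ⟨hp, h2⟩, -⟩
    · exact h'
    · have := hcoeff _ hp
      have := hα₁S.2
      omega
  have hstep : ∀ β ∈ B.Pos, ∀ k, ∀ m ∈ filt K z S α₁ w k,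
      ⁅x (-β), m⁆ ∈ filt K z S α₁ w (k - 1) := by
    intro β hβ k m hm
    rcases hcoeff β hβ with h0 | h1
    · refine lie_mem_filt_pred (S := S) (z := z) hα₁S hcomm (hw β hβ h0) (fun γ hγ => ?_) hm
      refine (hbr β hβ γ hγ).imp id ?_
      rintro ⟨n, ⟨hp, h2⟩, h3⟩
      exact ⟨n, β + γ, ⟨hp, by rw [h2, h0]⟩, h3⟩
    · exact filt_antitone (S := S) hα₁S (Nat.sub_le k 1)
        (lie_mem_filt (z := z) (S := S) ⟨hβ, h1⟩ hm)
  have hfold : ∀ l : List V, (∀ β ∈ l, β ∈ B.Pos) → ∀ k, ∀ m ∈ filt K z S α₁ w k,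
      l.foldr (fun γ m' => ⁅x (-γ), m'⁆) m ∈ filt K z S α₁ w (k - l.length) := by
    intro l hl k m hm
    induction l with
    | nil => simpa using hm
    | cons β l ih =>
      simp only [List.mem_cons, forall_eq_or_imp] at hl
      have := hstep β hl.1 _ _ (ih hl.2)
      rwa [Nat.sub_sub] at this
  have hiter : ∀ r k : ℕ, ∀ m ∈ filt K z S α₁ w k,
      (fun m' => ⁅x (-α₁), m'⁆)^[r] m ∈ filt K z S α₁ w (k + r) := by
    intro r k m hm
    induction r with
    | zero => simpa using hm
    | succ r ih =>
      rw [Function.iterate_succ_apply']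
      exact lie_mem_filt_succ (S := S) (z := z) hcomm ih
  intro r _ βs hβs u hu
  have h1 := hfold (List.ofFn βs) (by simpa [List.mem_ofFn] using hβs) (a + 1) u hu
  rw [List.length_ofFn] at h1
  exact filt_antitone (S := S) (z := z) hα₁S (by omega) (hiter r _ _ h1)
end
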